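/- arXiv:2508.04112 — 4 statements merged into one kernel-verified Lean document; each statement's English description precedes it below -/
import Mathlib

section
/- Let τ > 0 and a ∈ ℝ. The real 3×3 matrix A = ![![a, 0, 1], ![0, τ, 0], ![1/τ, 0, 0]] has characteristic polynomial (τ − λ)(λ² − aλ − 1/τ); consequently its eigenvalues are exactly the three real numbers τ, (a + √(a² + 4/τ))/2 and (a − √(a² + 4/τ))/2. In particular all eigenvalues of A are real. -/
open Polynomial

/-!
The flux of `q₁` depends on `q₁` alone, so the middle row of the Jacobian splits off the
eigenvalue `τ`. What remains is the `2 × 2` block coupling `q₀` and `q₂`, with trace `a` and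
determinant `-1/τ`, whose discriminant is `a² + 4/τ`.
-/

section DecoupledRow

variable {n : ℕ}

theorem charpoly_eq_mul_charpoly_submatrix_succAbove {R : Type*} [CommRing R]
    {M : Matrix (Fin (n + 1)) (Fin (n + 1)) R} {i : Fin (n + 1)} (hrow : ∀ j ≠ i, M i j = 0) :
    M.charpoly = (X - C (M i i)) * (M.submatrix i.succAbove i.succAbove).charpoly := by
  have hminor : M.charmatrix.submatrix i.succAbove i.succAbove =
      (M.submatrix i.succAbove i.succAbove).charmatrix := by
    ext1 j k
    simp only [Matrix.submatrix_apply, Matrix.charmatrix_apply, Matrix.diagonal_apply,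
      Fin.succAbove_right_inj]
  rw [Matrix.charpoly, Matrix.det_succ_row _ i, Finset.sum_eq_single i, Matrix.charmatrix_apply_eq,
    hminor, Matrix.charpoly, Even.neg_one_pow ⟨_, rfl⟩, one_mul]
  · intro j _ hj
    rw [Matrix.charmatrix_apply_ne _ _ _ hj.symm, hrow j hj, C_0, neg_zero, mul_zero, zero_mul]
  · exact fun hi ↦ absurd (Finset.mem_univ i) hi

theorem spectrum_eq_insert_spectrum_submatrix_succAbove {K : Type*} [Field K]
    {M : Matrix (Fin (n + 1)) (Fin (n + 1)) K} {i : Fin (n + 1)} (hrow : ∀ j ≠ i, M i j = 0) :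
    spectrum K M = insert (M i i) (spectrum K (M.submatrix i.succAbove i.succAbove)) := by
  ext μ
  rw [Set.mem_insert_iff, Matrix.mem_spectrum_iff_isRoot_charpoly,
    Matrix.mem_spectrum_iff_isRoot_charpoly, charpoly_eq_mul_charpoly_submatrix_succAbove hrow,
    root_mul, root_X_sub_C, eq_comm]

end DecoupledRow

theorem spectrum_fin_two_of_discr_eq_mul_self {K : Type*} [Field K] [NeZero (2 : K)]
    {M : Matrix (Fin 2) (Fin 2) K} {s : K} (hs : M.discr = s * s) :
    spectrum K M = {(M.trace + s) / 2, (M.trace - s) / 2} := by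
  have hdiscrim : discrim 1 (-M.trace) M.det = s * s := by
    rw [discrim, neg_sq, mul_one, ← hs, Matrix.discr_fin_two]
  ext μ
  have heval : M.charpoly.eval μ = 1 * (μ * μ) + -M.trace * μ + M.det := by
    simp only [Matrix.charpoly_fin_two, eval_add, eval_sub, eval_mul, eval_pow, eval_X, eval_C]
    ring
  rw [Matrix.mem_spectrum_iff_isRoot_charpoly, IsRoot.def, heval,
    quadratic_eq_zero_iff one_ne_zero hdiscrim, neg_neg, mul_one, Set.mem_insert_iff,
    Set.mem_singleton_iff]

theorem bbm_hyperbolic_charpoly_and_spectrum_general {K : Type*} [Field K] (τ a b : K) :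
    !![a, 0, 1; 0, τ, 0; b, 0, 0].charpoly = (X - C τ) * (X ^ 2 - C a * X - C b) ∧
      ∀ [NeZero (2 : K)] (s : K), a ^ 2 + 4 * b = s * s →
        spectrum K !![a, 0, 1; 0, τ, 0; b, 0, 0] = {τ, (a + s) / 2, (a - s) / 2} := by
  set A : Matrix (Fin 3) (Fin 3) K := !![a, 0, 1; 0, τ, 0; b, 0, 0]
  have hrow : ∀ j ≠ 1, A 1 j = 0 := by
    intro j hj
    fin_cases j
    exacts [rfl, absurd rfl hj, rfl]
  have hdiag : A 1 1 = τ := rfl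
  have hminor : A.submatrix (Fin.succAbove 1) (Fin.succAbove 1) = !![a, 1; b, 0] := by
    ext j k
    fin_cases j <;> fin_cases k <;> rfl
  have htrace : !![a, 1; b, 0].trace = a := by
    rw [Matrix.trace_fin_two_of, add_zero]
  have hdet : !![a, 1; b, 0].det = -b := by
    rw [Matrix.det_fin_two_of, mul_zero, one_mul, zero_sub]
  refine ⟨?_, fun s hs ↦ ?_⟩
  · rw [charpoly_eq_mul_charpoly_submatrix_succAbove hrow, hdiag, hminor,
      Matrix.charpoly_fin_two, htrace, hdet, C_neg, ← sub_eq_add_neg]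
  · have hdiscr : !![a, 1; b, 0].discr = s * s := by
      rw [Matrix.discr_fin_two, htrace, hdet, mul_neg, sub_neg_eq_add, hs]
    rw [spectrum_eq_insert_spectrum_submatrix_succAbove hrow, hdiag, hminor,
      spectrum_fin_two_of_discr_eq_mul_self hdiscr, htrace]

/-- The flux Jacobian of the hyperbolic approximation of the generalized
Benjamin–Bona–Mahony equation has characteristic polynomial
`(X - τ)(X² - aX - 1/τ)` (i.e. `det(A - λI) = (τ - λ)(λ² - aλ - 1/τ)`),
and its eigenvalues are exactly the three real numbers
`τ`, `(a + √(a² + 4/τ))/2` and `(a - √(a² + 4/τ))/2`. -/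
theorem bbm_hyperbolic_charpoly_and_spectrum (τ a : ℝ) (hτ : 0 < τ)
    (A : Matrix (Fin 3) (Fin 3) ℝ)
    (hA : A = !![a, 0, 1; 0, τ, 0; 1/τ, 0, 0]) :
    A.charpoly = (X - C τ) * (X ^ 2 - C a * X - C (1 / τ)) ∧
      spectrum ℝ A = {τ, (a + Real.sqrt (a ^ 2 + 4 / τ)) / 2,
        (a - Real.sqrt (a ^ 2 + 4 / τ)) / 2} := by
  obtain ⟨hcharpoly, hspectrum⟩ := bbm_hyperbolic_charpoly_and_spectrum_general τ a (1 / τ)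
  exact hA ▸ ⟨hcharpoly, hspectrum _ (by rw [Real.mul_self_sqrt (by positivity), mul_one_div])⟩
end

section
/- Let L, T, τ > 0 and let f : ℝ → ℝ be continuously differentiable. Let q₀, q₁, q₂ : [0,T] × ℝ → ℝ be continuously differentiable and L-periodic in the second variable, satisfying ∂_t q₀ + ∂_x f(q₀) + ∂_x q₂ = 0, ∂_t q₁ + τ ∂_x q₁ = −q₂ and τ ∂_t q₂ + ∂_x q₀ = q₁ on [0,T] × ℝ. Then the energy t ↦ η(q)(t) = ∫₀^L (½ q₀(t,x)² + ½ q₁(t,x)² + (τ/2) q₂(t,x)²) dx is constant on [0,T]. -/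
open MeasureTheory

/-- Partial derivative with respect to the first (time) variable. -/
noncomputable def pdt (u : ℝ → ℝ → ℝ) : ℝ → ℝ → ℝ :=
  fun t x => deriv (fun s => u s x) t

/-- Partial derivative with respect to the second (space) variable. -/
noncomputable def pdx (u : ℝ → ℝ → ℝ) : ℝ → ℝ → ℝ :=
  fun t x => deriv (fun y => u t y) x

/-! Multiplying the three equations by `q₀`, `q₁`, `q₂` and adding, the source terms `∓ q₁ q₂`
cancel and every space derivative becomes exact: `q₀ ∂ₓ f(q₀) = ∂ₓ (q₀ f(q₀) - F(q₀))` with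
`F' = f`, and `q₀ ∂ₓ q₂ + q₂ ∂ₓ q₀ = ∂ₓ (q₀ q₂)`. Hence the energy density `e` satisfies a
conservation law `∂ₜ e + ∂ₓ G = 0` whose flux `G` takes equal values at the two ends of a period, so
that `d/dt ∫ e = 0`. -/

open Function

section ConservationLaw

variable {E : Type*} [NormedAddCommGroup E] [NormedSpace ℝ E] {a b : ℝ}

theorem hasDerivAt_intervalIntegral_of_continuous_deriv {𝕜 : Type*} [RCLike 𝕜] [NormedSpace 𝕜 E]
    {μ : Measure ℝ} [IsLocallyFiniteMeasure μ] {u u' : 𝕜 → ℝ → E} (hu : ∀ t, Continuous (u t))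
    (hu' : Continuous (uncurry u')) (hderiv : ∀ t x, HasDerivAt (fun s => u s x) (u' t x) t)
    (t : 𝕜) : HasDerivAt (fun s => ∫ x in a..b, u s x ∂μ) (∫ x in a..b, u' t x ∂μ) t := by
  obtain ⟨C, hC⟩ := ((isCompact_closedBall t 1).prod
    (isCompact_uIcc (a := a) (b := b))).exists_bound_of_continuousOn hu'.continuousOn
  exact (intervalIntegral.hasDerivAt_integral_of_dominated_loc_of_deriv_le
    (Metric.closedBall_mem_nhds t one_pos)
    (.of_forall fun s => (hu s).aestronglyMeasurable)
    ((hu t).intervalIntegrable a b)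
    (hu'.uncurry_left t).aestronglyMeasurable
    (.of_forall fun x hx s hs => hC (s, x) ⟨hs, Set.uIoc_subset_uIcc hx⟩)
    intervalIntegrable_const
    (.of_forall fun x _ s _ => hderiv s x)).2

theorem intervalIntegral_eq_of_conservation_law [CompleteSpace E] {u u' F : ℝ → ℝ → E} {I : Set ℝ}
    (hu : ∀ t, Continuous (u t)) (hu' : Continuous (uncurry u'))
    (hderiv : ∀ t x, HasDerivAt (fun s => u s x) (u' t x) t) (hI : I.OrdConnected)
    (hflux : ∀ t ∈ I, ∀ x ∈ Set.uIcc a b, HasDerivAt (F t) (-u' t x) x)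
    (hends : ∀ t ∈ I, F t a = F t b) {s t : ℝ} (hs : s ∈ I) (ht : t ∈ I) :
    ∫ x in a..b, u t x = ∫ x in a..b, u s x := by
  have hzero : ∀ r ∈ I, ∫ x in a..b, u' r x = 0 := fun r hr => by
    have hint := intervalIntegral.integral_eq_sub_of_hasDerivAt (hflux r hr)
      ((hu'.uncurry_left r).neg.intervalIntegrable a b)
    rwa [intervalIntegral.integral_neg, hends r hr, sub_self, neg_eq_zero] at hint
  have hderivZero : ∀ r ∈ I, HasDerivWithinAt (fun r => ∫ x in a..b, u r x) 0 I r := fun r hr =>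
    hzero r hr ▸
      (hasDerivAt_intervalIntegral_of_continuous_deriv hu hu' hderiv r).hasDerivWithinAt
  have hle := hI.convex.norm_image_sub_le_of_norm_hasDerivWithin_le (C := 0) hderivZero
    (fun _ _ => norm_zero.le) hs ht
  rwa [zero_mul, norm_le_zero_iff, sub_eq_zero] at hle

end ConservationLaw

section Slices

variable {𝕜 E F G : Type*} [NontriviallyNormedField 𝕜] [NormedAddCommGroup E] [NormedSpace 𝕜 E]
  [NormedAddCommGroup F] [NormedSpace 𝕜 F] [NormedAddCommGroup G] [NormedSpace 𝕜 G]
  {u : E → F → G} {t : E} {x : F}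

theorem differentiableAt_of_uncurry_left (hu : DifferentiableAt 𝕜 (uncurry u) (t, x)) :
    DifferentiableAt 𝕜 (u t) x :=
  hu.comp x (hasFDerivAt_prodMk_right t x).differentiableAt

theorem differentiableAt_of_uncurry_right (hu : DifferentiableAt 𝕜 (uncurry u) (t, x)) :
    DifferentiableAt 𝕜 (fun s => u s x) t := by
  have hline : DifferentiableAt 𝕜 (uncurry u ∘ fun s => (s, x)) t :=
    hu.comp t (hasFDerivAt_prodMk_left t x).differentiableAt
  exact hline

end Slices

theorem pdt_eq_fderiv_apply {u : ℝ → ℝ → ℝ} {t x : ℝ}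
    (hu : DifferentiableAt ℝ (uncurry u) (t, x)) :
    pdt u t x = fderiv ℝ (uncurry u) (t, x) (1, 0) := by
  have hline : HasDerivAt (fun s : ℝ => (s, x)) (1, 0) t :=
    (hasDerivAt_id t).prodMk (hasDerivAt_const t x)
  exact (hu.hasFDerivAt.comp_hasDerivAt t hline).deriv

theorem continuous_pdt {u : ℝ → ℝ → ℝ} (hu : ContDiff ℝ 1 (uncurry u)) :
    Continuous (uncurry (pdt u)) :=
  ((hu.continuous_fderiv one_ne_zero).clm_apply continuous_const).congr fun p =>
    (pdt_eq_fderiv_apply (hu.differentiable one_ne_zero p)).symm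

theorem hasDerivAt_mul_comp_sub_integral {f w : ℝ → ℝ} {x : ℝ} (hf : Continuous f)
    (hw : DifferentiableAt ℝ w x) (hfw : DifferentiableAt ℝ (fun y => f (w y)) x) (c : ℝ) :
    HasDerivAt (fun y => w y * f (w y) - ∫ v in c..w y, f v)
      (w x * deriv (fun y => f (w y)) x) x := by
  have hprimitive : HasDerivAt (fun y => ∫ v in c..w y, f v) (f (w x) * deriv w x) x :=
    (hf.integral_hasStrictDerivAt c (w x)).hasDerivAt.comp x hw.hasDerivAt
  exact ((hw.hasDerivAt.mul hfw.hasDerivAt).sub hprimitive).congr_deriv (by ring)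

/-- The system (H_BBM) at the single point `(t, x)`; `τ` may be any real number, and `τ = 0` is the
generalized Benjamin–Bona–Mahony equation written as a first-order system. -/
structure HyperbolicBBM (f : ℝ → ℝ) (τ : ℝ) (q₀ q₁ q₂ : ℝ → ℝ → ℝ) (t x : ℝ) : Prop where
  eq₀ : pdt q₀ t x + pdx (fun s y => f (q₀ s y)) t x + pdx q₂ t x = 0
  eq₁ : pdt q₁ t x + τ * pdx q₁ t x = -q₂ t x
  eq₂ : τ * pdt q₂ t x + pdx q₀ t x = q₁ t x

/-- The density of the energy `η(q)` of (H_BBM). -/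
noncomputable def bbmEnergyDensity (τ : ℝ) (q₀ q₁ q₂ : ℝ → ℝ → ℝ) (t x : ℝ) : ℝ :=
  q₀ t x ^ 2 / 2 + q₁ t x ^ 2 / 2 + τ / 2 * q₂ t x ^ 2

/-- The flux that accompanies `bbmEnergyDensity` in the local conservation law of the energy. The
primitive of `f` is normalized to vanish at `0`. -/
noncomputable def bbmEnergyFlux (f : ℝ → ℝ) (τ : ℝ) (q₀ q₁ q₂ : ℝ → ℝ → ℝ) (t x : ℝ) : ℝ :=
  q₀ t x * f (q₀ t x) - (∫ v in (0 : ℝ)..q₀ t x, f v) + q₀ t x * q₂ t x + τ / 2 * q₁ t x ^ 2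

section Energy

variable {f : ℝ → ℝ} {τ : ℝ} {q₀ q₁ q₂ : ℝ → ℝ → ℝ} {t x : ℝ}

theorem contDiff_bbmEnergyDensity {n : WithTop ℕ∞} (hq₀ : ContDiff ℝ n (uncurry q₀))
    (hq₁ : ContDiff ℝ n (uncurry q₁)) (hq₂ : ContDiff ℝ n (uncurry q₂)) :
    ContDiff ℝ n (uncurry (bbmEnergyDensity τ q₀ q₁ q₂)) :=
  (((hq₀.pow 2).div_const 2).add ((hq₁.pow 2).div_const 2)).add (contDiff_const.mul (hq₂.pow 2))

theorem pdt_bbmEnergyDensity (hq₀ : DifferentiableAt ℝ (fun s => q₀ s x) t)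
    (hq₁ : DifferentiableAt ℝ (fun s => q₁ s x) t)
    (hq₂ : DifferentiableAt ℝ (fun s => q₂ s x) t) :
    pdt (bbmEnergyDensity τ q₀ q₁ q₂) t x =
      q₀ t x * pdt q₀ t x + q₁ t x * pdt q₁ t x + τ * (q₂ t x * pdt q₂ t x) := by
  have hderiv := (((hq₀.hasDerivAt.pow 2).div_const 2).add
    ((hq₁.hasDerivAt.pow 2).div_const 2)).add ((hq₂.hasDerivAt.pow 2).const_mul (τ / 2))
  refine (hderiv.congr_deriv ?_).deriv
  simp only [pdt]
  ring

theorem hasDerivAt_bbmEnergyFlux (hf : Continuous f) (hq₀ : DifferentiableAt ℝ (q₀ t) x)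
    (hfq₀ : DifferentiableAt ℝ (fun y => f (q₀ t y)) x) (hq₁ : DifferentiableAt ℝ (q₁ t) x)
    (hq₂ : DifferentiableAt ℝ (q₂ t) x) :
    HasDerivAt (bbmEnergyFlux f τ q₀ q₁ q₂ t)
      (q₀ t x * pdx (fun s y => f (q₀ s y)) t x
        + (pdx q₀ t x * q₂ t x + q₀ t x * pdx q₂ t x) + τ * (q₁ t x * pdx q₁ t x)) x := by
  have hderiv := ((hasDerivAt_mul_comp_sub_integral hf hq₀ hfq₀ 0).add
    (hq₀.hasDerivAt.mul hq₂.hasDerivAt)).add ((hq₁.hasDerivAt.pow 2).const_mul (τ / 2))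
  refine hderiv.congr_deriv ?_
  simp only [pdx]
  ring

theorem HyperbolicBBM.hasDerivAt_energyFlux (h : HyperbolicBBM f τ q₀ q₁ q₂ t x)
    (hf : Differentiable ℝ f) (hq₀ : DifferentiableAt ℝ (uncurry q₀) (t, x))
    (hq₁ : DifferentiableAt ℝ (uncurry q₁) (t, x)) (hq₂ : DifferentiableAt ℝ (uncurry q₂) (t, x)) :
    HasDerivAt (bbmEnergyFlux f τ q₀ q₁ q₂ t) (-pdt (bbmEnergyDensity τ q₀ q₁ q₂) t x) x := by
  have hq₀x : DifferentiableAt ℝ (q₀ t) x := differentiableAt_of_uncurry_left hq₀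
  refine (hasDerivAt_bbmEnergyFlux hf.continuous hq₀x (hf.differentiableAt.comp x hq₀x)
    (differentiableAt_of_uncurry_left hq₁) (differentiableAt_of_uncurry_left hq₂)).congr_deriv ?_
  rw [pdt_bbmEnergyDensity (differentiableAt_of_uncurry_right hq₀)
    (differentiableAt_of_uncurry_right hq₁) (differentiableAt_of_uncurry_right hq₂)]
  linear_combination q₀ t x * h.eq₀ + q₁ t x * h.eq₁ + q₂ t x * h.eq₂

end Energy

theorem bbm_hyperbolic_energy_conservation_general {a b τ : ℝ} {I : Set ℝ} (hI : I.OrdConnected)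
    {f : ℝ → ℝ} (hf : Differentiable ℝ f) {q₀ q₁ q₂ : ℝ → ℝ → ℝ}
    (hq₀ : ContDiff ℝ 1 (uncurry q₀)) (hq₁ : ContDiff ℝ 1 (uncurry q₁))
    (hq₂ : ContDiff ℝ 1 (uncurry q₂)) (hends₀ : ∀ t ∈ I, q₀ t a = q₀ t b)
    (hends₁ : ∀ t ∈ I, q₁ t a = q₁ t b) (hends₂ : ∀ t ∈ I, q₂ t a = q₂ t b)
    (heq : ∀ t ∈ I, ∀ x ∈ Set.uIcc a b, HyperbolicBBM f τ q₀ q₁ q₂ t x)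
    {s t : ℝ} (hs : s ∈ I) (ht : t ∈ I) :
    ∫ x in a..b, bbmEnergyDensity τ q₀ q₁ q₂ t x =
      ∫ x in a..b, bbmEnergyDensity τ q₀ q₁ q₂ s x := by
  have hdensity : ContDiff ℝ 1 (uncurry (bbmEnergyDensity τ q₀ q₁ q₂)) :=
    contDiff_bbmEnergyDensity hq₀ hq₁ hq₂
  refine intervalIntegral_eq_of_conservation_law (F := bbmEnergyFlux f τ q₀ q₁ q₂)
    hdensity.continuous.uncurry_left (continuous_pdt hdensity)
    (fun r x => (differentiableAt_of_uncurry_right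
      (hdensity.differentiable one_ne_zero (r, x))).hasDerivAt) hI
    (fun r hr x hx => (heq r hr x hx).hasDerivAt_energyFlux hf
      (hq₀.differentiable one_ne_zero _) (hq₁.differentiable one_ne_zero _)
      (hq₂.differentiable one_ne_zero _))
    (fun r hr => ?_) hs ht
  simp only [bbmEnergyFlux, hends₀ r hr, hends₁ r hr, hends₂ r hr]

/-- Energy conservation for the hyperbolic approximation of the generalized
Benjamin–Bona–Mahony equation. -/
theorem bbm_hyperbolic_energy_conservation
    (L T τ : ℝ) (hL : 0 < L) (hT : 0 < T) (hτ : 0 < τ)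
    (f : ℝ → ℝ) (hf : ContDiff ℝ 1 f)
    (q₀ q₁ q₂ : ℝ → ℝ → ℝ)
    (hq₀ : ContDiff ℝ 1 (Function.uncurry q₀))
    (hq₁ : ContDiff ℝ 1 (Function.uncurry q₁))
    (hq₂ : ContDiff ℝ 1 (Function.uncurry q₂))
    (hper₀ : ∀ t, Function.Periodic (q₀ t) L)
    (hper₁ : ∀ t, Function.Periodic (q₁ t) L)
    (hper₂ : ∀ t, Function.Periodic (q₂ t) L)
    (heq₀ : ∀ t ∈ Set.Icc (0:ℝ) T, ∀ x : ℝ,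
      pdt q₀ t x + pdx (fun s y => f (q₀ s y)) t x + pdx q₂ t x = 0)
    (heq₁ : ∀ t ∈ Set.Icc (0:ℝ) T, ∀ x : ℝ,
      pdt q₁ t x + τ * pdx q₁ t x = - q₂ t x)
    (heq₂ : ∀ t ∈ Set.Icc (0:ℝ) T, ∀ x : ℝ,
      τ * pdt q₂ t x + pdx q₀ t x = q₁ t x) :
    ∀ t ∈ Set.Icc (0:ℝ) T,
      (∫ x in (0:ℝ)..L, (q₀ t x ^ 2 / 2 + q₁ t x ^ 2 / 2 + τ / 2 * q₂ t x ^ 2))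
        = ∫ x in (0:ℝ)..L, (q₀ 0 x ^ 2 / 2 + q₁ 0 x ^ 2 / 2 + τ / 2 * q₂ 0 x ^ 2) :=
  fun _ ht => bbm_hyperbolic_energy_conservation_general Set.ordConnected_Icc
    (hf.differentiable one_ne_zero) hq₀ hq₁ hq₂ (fun s _ => (hper₀ s).eq.symm)
    (fun s _ => (hper₁ s).eq.symm) (fun s _ => (hper₂ s).eq.symm)
    (fun s hs x _ => ⟨heq₀ s hs x, heq₁ s hs x, heq₂ s hs x⟩) (Set.left_mem_Icc.2 hT.le) ht
end

section
/- Let L, T, τ > 0, let f : ℝ → ℝ be continuously differentiable, and let u : [0,T] × ℝ → ℝ be smooth (C⁵ suffices), L-periodic in x, and satisfy ∂_t u + ∂_x f(u) − ∂_x² ∂_t u = 0 on [0,T] × ℝ. Define q̄₀ = u, q̄₁ = ∂_x u − τ ∂_t² ∂_x u, q̄₂ = −∂_t ∂_x u and R = −∂_t³ ∂_x u + ∂_x² u − τ ∂_t² ∂_x² u. Then on [0,T] × ℝ one has exactly ∂_t q̄₀ + ∂_x f(q̄₀) + ∂_x q̄₂ = 0, τ ∂_t q̄₂ + ∂_x q̄₀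 = q̄₁, and ∂_t q̄₁ + τ ∂_x q̄₁ = −q̄₂ + τ R; i.e. the triple (q̄₀, q̄₁, q̄₂) solves the hyperbolic approximation with a residual τR appearing only in the second equation. -/
open MeasureTheory

/-!
Both partial derivatives are line derivatives of the uncurried function, so they commute on `C²`
functions by symmetry of the second derivative. Hence `∂_x q̄₂ = -∂_x² ∂_t u`, which turns the BBM
equation into the first equation, while the last equation is the definition of `q̄₁`. In the middle
one the terms of order `τ⁰` cancel because `∂_t ∂_x u = -q̄₂`, and what is left is `τ R`.
-/

open Function

section LineDeriv

variable {𝕜 E F : Type*} [NontriviallyNormedField 𝕜]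
  [NormedAddCommGroup E] [NormedSpace 𝕜 E] [NormedAddCommGroup F] [NormedSpace 𝕜 F]
  {f : E → F} {m n : WithTop ℕ∞}

theorem contDiff_lineDeriv (hf : ContDiff 𝕜 n f) (hmn : m + 1 ≤ n) (v : E) :
    ContDiff 𝕜 m fun x => lineDeriv 𝕜 f x v := by
  have hdiff : Differentiable 𝕜 f := (hf.of_le (le_add_self.trans hmn)).differentiable one_ne_zero
  simp only [fun x => (hdiff x).lineDeriv_eq_fderiv (v := v)]
  exact (hf.fderiv_right hmn).clm_apply contDiff_const

theorem lineDeriv_lineDeriv_eq_fderiv_fderiv {x : E} (hf : ContDiffAt 𝕜 2 f x) (v w : E) :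
    lineDeriv 𝕜 (fun y => lineDeriv 𝕜 f y v) x w = fderiv 𝕜 (fderiv 𝕜 f) x w v := by
  have hdiff : DifferentiableAt 𝕜 (fderiv 𝕜 f) x :=
    (hf.fderiv_right (m := 1) (by norm_num)).differentiableAt one_ne_zero
  have hfirst : (fun y => lineDeriv 𝕜 f y v) =ᶠ[nhds x] fun y => fderiv 𝕜 f y v :=
    (hf.eventually (by simp)).mono fun y hy =>
      (hy.differentiableAt two_ne_zero).lineDeriv_eq_fderiv
  rw [hfirst.lineDeriv_eq, (hdiff.clm_apply (differentiableAt_const v)).lineDeriv_eq_fderiv,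
    fderiv_clm_apply hdiff (differentiableAt_const v)]
  simp

theorem lineDeriv_comm {x : E} (hf : ContDiffAt 𝕜 n f x) (hn : minSmoothness 𝕜 2 ≤ n) (v w : E) :
    lineDeriv 𝕜 (fun y => lineDeriv 𝕜 f y v) x w =
      lineDeriv 𝕜 (fun y => lineDeriv 𝕜 f y w) x v := by
  have hf₂ : ContDiffAt 𝕜 2 f x := hf.of_le (le_minSmoothness.trans hn)
  rw [lineDeriv_lineDeriv_eq_fderiv_fderiv hf₂, lineDeriv_lineDeriv_eq_fderiv_fderiv hf₂]
  exact hf.isSymmSndFDerivAt hn w v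

end LineDeriv

section PartialDerivatives

variable {v w : ℝ → ℝ → ℝ} {m n : WithTop ℕ∞}

theorem uncurry_pdt (v : ℝ → ℝ → ℝ) :
    uncurry (pdt v) = fun p => lineDeriv ℝ (uncurry v) p (1, 0) := by
  funext ⟨t, x⟩
  simp [pdt, lineDeriv, deriv_comp_const_add (fun s => v s x)]

theorem uncurry_pdx (v : ℝ → ℝ → ℝ) :
    uncurry (pdx v) = fun p => lineDeriv ℝ (uncurry v) p (0, 1) := by
  funext ⟨t, x⟩
  simp [pdx, lineDeriv, deriv_comp_const_add (v t)]

theorem contDiff_uncurry_pdt (hv : ContDiff ℝ n (uncurry v)) (hmn : m + 1 ≤ n) :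
    ContDiff ℝ m (uncurry (pdt v)) :=
  uncurry_pdt v ▸ contDiff_lineDeriv hv hmn (1, 0)

theorem contDiff_uncurry_pdt_pdt (hv : ContDiff ℝ n (uncurry v)) (hmn : m + 1 + 1 ≤ n) :
    ContDiff ℝ m (uncurry (pdt (pdt v))) :=
  contDiff_uncurry_pdt (contDiff_uncurry_pdt hv hmn) le_rfl

theorem contDiff_uncurry_pdx (hv : ContDiff ℝ n (uncurry v)) (hmn : m + 1 ≤ n) :
    ContDiff ℝ m (uncurry (pdx v)) :=
  uncurry_pdx v ▸ contDiff_lineDeriv hv hmn (0, 1)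

theorem pdx_pdt_comm (hv : ContDiff ℝ 2 (uncurry v)) : pdx (pdt v) = pdt (pdx v) := by
  apply uncurry_injective
  simp only [uncurry_pdx, uncurry_pdt]
  funext p
  exact lineDeriv_comm hv.contDiffAt (by simp) (1, 0) (0, 1)

theorem pdx_pdt_pdt_comm (hv : ContDiff ℝ 3 (uncurry v)) :
    pdx (pdt (pdt v)) = pdt (pdt (pdx v)) := by
  rw [pdx_pdt_comm (contDiff_uncurry_pdt hv (by norm_num)),
    pdx_pdt_comm (hv.of_le (by norm_num))]

theorem pdt_neg (v : ℝ → ℝ → ℝ) (t x : ℝ) : pdt (fun s y => -v s y) t x = -pdt v t x :=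
  deriv.fun_neg

theorem pdx_neg (v : ℝ → ℝ → ℝ) (t x : ℝ) : pdx (fun s y => -v s y) t x = -pdx v t x :=
  deriv.fun_neg

theorem pdt_sub_const_mul {t x : ℝ} (hv : DifferentiableAt ℝ (uncurry v) (t, x))
    (hw : DifferentiableAt ℝ (uncurry w) (t, x)) (c : ℝ) :
    pdt (fun s y => v s y - c * w s y) t x = pdt v t x - c * pdt w t x := by
  have hv' : DifferentiableAt ℝ (fun s => v s x) t :=
    hv.comp (f := fun s => (s, x)) t (by fun_prop)
  have hw' : DifferentiableAt ℝ (fun s => w s x) t :=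
    hw.comp (f := fun s => (s, x)) t (by fun_prop)
  exact (hv'.hasDerivAt.sub (hw'.hasDerivAt.const_mul c)).deriv

theorem pdx_sub_const_mul {t x : ℝ} (hv : DifferentiableAt ℝ (uncurry v) (t, x))
    (hw : DifferentiableAt ℝ (uncurry w) (t, x)) (c : ℝ) :
    pdx (fun s y => v s y - c * w s y) t x = pdx v t x - c * pdx w t x := by
  have hv' : DifferentiableAt ℝ (v t) x := hv.comp (f := fun y => (t, y)) x (by fun_prop)
  have hw' : DifferentiableAt ℝ (w t) x := hw.comp (f := fun y => (t, y)) x (by fun_prop)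
  exact (hv'.hasDerivAt.sub (hw'.hasDerivAt.const_mul c)).deriv

end PartialDerivatives

section Approximation

variable {u : ℝ → ℝ → ℝ}

/-- The component `q̄₁` of the approximate solution of the hyperbolic system built from a BBM
solution `u`. -/
noncomputable def bbmQ₁ (τ : ℝ) (u : ℝ → ℝ → ℝ) : ℝ → ℝ → ℝ :=
  fun t x => pdx u t x - τ * pdt (pdt (pdx u)) t x

/-- The component `q̄₂` of the approximate solution of the hyperbolic system built from a BBM
solution `u`. -/
noncomputable def bbmQ₂ (u : ℝ → ℝ → ℝ) : ℝ → ℝ → ℝ :=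
  fun t x => -pdt (pdx u) t x

/-- The function `R` such that `(u, q̄₁, q̄₂)` leaves the residual `τ R` in the second equation of
the hyperbolic system; the factor `τ` is not included. -/
noncomputable def bbmResidual (τ : ℝ) (u : ℝ → ℝ → ℝ) : ℝ → ℝ → ℝ :=
  fun t x =>
    -pdt (pdt (pdt (pdx u))) t x + pdx (pdx u) t x - τ * pdt (pdt (pdx (pdx u))) t x

theorem pdx_bbmQ₂ (hu : ContDiff ℝ 2 (uncurry u)) (t x : ℝ) :
    pdx (bbmQ₂ u) t x = -pdx (pdx (pdt u)) t x := by
  rw [pdx_pdt_comm hu]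
  exact pdx_neg _ t x

theorem pdt_bbmQ₂ (u : ℝ → ℝ → ℝ) (t x : ℝ) :
    pdt (bbmQ₂ u) t x = -pdt (pdt (pdx u)) t x :=
  pdt_neg _ t x

theorem pdt_bbmQ₁ (hu : ContDiff ℝ 4 (uncurry u)) (τ t x : ℝ) :
    pdt (bbmQ₁ τ u) t x = pdt (pdx u) t x - τ * pdt (pdt (pdt (pdx u))) t x := by
  have hux : ContDiff ℝ 3 (uncurry (pdx u)) := contDiff_uncurry_pdx hu (by norm_num)
  have huxtt : ContDiff ℝ 1 (uncurry (pdt (pdt (pdx u)))) :=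
    contDiff_uncurry_pdt_pdt hux (by norm_num)
  exact pdt_sub_const_mul (hux.differentiable three_ne_zero _)
    (huxtt.differentiable one_ne_zero _) τ

theorem pdx_bbmQ₁ (hu : ContDiff ℝ 4 (uncurry u)) (τ t x : ℝ) :
    pdx (bbmQ₁ τ u) t x = pdx (pdx u) t x - τ * pdt (pdt (pdx (pdx u))) t x := by
  have hux : ContDiff ℝ 3 (uncurry (pdx u)) := contDiff_uncurry_pdx hu (by norm_num)
  have huxtt : ContDiff ℝ 1 (uncurry (pdt (pdt (pdx u)))) :=
    contDiff_uncurry_pdt_pdt hux (by norm_num)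
  rw [← pdx_pdt_pdt_comm hux]
  exact pdx_sub_const_mul (hux.differentiable three_ne_zero _)
    (huxtt.differentiable one_ne_zero _) τ

/-- For the generalized BBM equation, `g = ∂_x f(u)`. -/
theorem bbm_approximate_solution_residual_general (τ : ℝ) (hu : ContDiff ℝ 4 (uncurry u))
    (g : ℝ → ℝ → ℝ) {t x : ℝ} (hueq : pdt u t x + g t x - pdx (pdx (pdt u)) t x = 0) :
    pdt u t x + g t x + pdx (bbmQ₂ u) t x = 0 ∧
      τ * pdt (bbmQ₂ u) t x + pdx u t x = bbmQ₁ τ u t x ∧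
      pdt (bbmQ₁ τ u) t x + τ * pdx (bbmQ₁ τ u) t x =
        -bbmQ₂ u t x + τ * bbmResidual τ u t x := by
  refine ⟨?_, ?_, ?_⟩
  · rw [pdx_bbmQ₂ (hu.of_le (by norm_num)), ← sub_eq_add_neg]
    exact hueq
  · rw [pdt_bbmQ₂, bbmQ₁]
    ring
  · rw [pdt_bbmQ₁ hu, pdx_bbmQ₁ hu, bbmQ₂, bbmResidual]
    ring

end Approximation

/-- Given a smooth solution `u` of the generalized BBM equation
`∂_t u + ∂_x f(u) - ∂_x² ∂_t u = 0`, the triple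
`q̄₀ = u`, `q̄₁ = ∂_x u - τ ∂_t² ∂_x u`, `q̄₂ = -∂_t ∂_x u`
solves the hyperbolic approximation exactly, except for a residual `τ R`
(with `R = -∂_t³ ∂_x u + ∂_x² u - τ ∂_t² ∂_x² u`) in the second equation. -/
theorem bbm_approximate_solution_residual
    (L T τ : ℝ) (hL : 0 < L) (hT : 0 < T) (hτ : 0 < τ)
    (f : ℝ → ℝ) (hf : ContDiff ℝ 1 f)
    (u : ℝ → ℝ → ℝ) (hu : ContDiff ℝ 5 (Function.uncurry u))
    (huper : ∀ t, Function.Periodic (u t) L)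
    (hueq : ∀ t ∈ Set.Icc (0:ℝ) T, ∀ x : ℝ,
      pdt u t x + pdx (fun s y => f (u s y)) t x - pdx (pdx (pdt u)) t x = 0) :
    let qb₀ : ℝ → ℝ → ℝ := u
    let qb₁ : ℝ → ℝ → ℝ := fun t x => pdx u t x - τ * pdt (pdt (pdx u)) t x
    let qb₂ : ℝ → ℝ → ℝ := fun t x => - pdt (pdx u) t x
    let R : ℝ → ℝ → ℝ := fun t x =>
      - pdt (pdt (pdt (pdx u))) t x + pdx (pdx u) t x
        - τ * pdt (pdt (pdx (pdx u))) t x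
    ∀ t ∈ Set.Icc (0:ℝ) T, ∀ x : ℝ,
      (pdt qb₀ t x + pdx (fun s y => f (qb₀ s y)) t x + pdx qb₂ t x = 0) ∧
      (τ * pdt qb₂ t x + pdx qb₀ t x = qb₁ t x) ∧
      (pdt qb₁ t x + τ * pdx qb₁ t x = - qb₂ t x + τ * R t x) :=
  fun t ht x => bbm_approximate_solution_residual_general τ (hu.of_le (by norm_num))
    (pdx fun s y => f (u s y)) (hueq t ht x)
end

section
/- Let m ≥ 3 be odd, σ₀ ∈ {−1, +1}, and L, T, τ > 0. Let q₀, q₁, …, q_{m−1} : [0,T] × ℝ → ℝ be C¹ functions, L-periodic in x, satisfying ∂_t q₀ + σ₀ ∂_x q_{m−1} = 0 and, for every j ∈ {1, …, m−1}, τ ∂_t q_j + σ₀ (−1)^j ∂_x q_{m−j−1} = σ₀ (−1)^j q_{m−j}. Then the energy t ↦ η(q)(t) = ∫₀^L ( ½ q₀(t,x)² + (τ/2) Σ_{j=1}^{m−1} q_j(t,x)² ) dx is constant on [0,T]. -/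
/-!
The system is a symmetric hyperbolic one, `D ∂_t q + A ∂_x q = B q` with `D = diag(1, τ, …, τ)`: the
entries `σ₀ (-1)^i` of `A` sit at `i + j = m - 1`, which is even, so `A` is symmetric, while those
of `B` sit at `i + j = m`, which is odd, so `B` is skew. Pairing the system with `q` therefore kills
the source and leaves the conservation law `∂_t (q ⬝ D q) + ∂_x (q ⬝ A q) = 0`. By the divergence
theorem on `[0, t] × [0, L]`, the integral of `q ⬝ D q` can only change through the boundary flux
`q ⬝ A q`, and its contributions at `0` and `L` cancel by periodicity.
-/

open MeasureTheory

open Matrix Set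

lemma hasDerivAt_pdt {u : ℝ → ℝ → ℝ} {t x : ℝ}
    (hu : DifferentiableAt ℝ (Function.uncurry u) (t, x)) :
    HasDerivAt (fun s => u s x) (pdt u t x) t :=
  (hu.fun_comp' t (by fun_prop : DifferentiableAt ℝ (fun s => (s, x)) t)).hasDerivAt

lemma hasDerivAt_pdx {u : ℝ → ℝ → ℝ} {t x : ℝ}
    (hu : DifferentiableAt ℝ (Function.uncurry u) (t, x)) :
    HasDerivAt (fun y => u t y) (pdx u t x) x :=
  (hu.fun_comp' x (by fun_prop : DifferentiableAt ℝ (fun y => (t, y)) x)).hasDerivAt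

lemma fderiv_uncurry_apply_one_zero {u : ℝ → ℝ → ℝ} {t x : ℝ}
    (hu : DifferentiableAt ℝ (Function.uncurry u) (t, x)) :
    fderiv ℝ (Function.uncurry u) (t, x) (1, 0) = pdt u t x :=
  (hu.hasFDerivAt.comp_hasDerivAt t ((hasDerivAt_id t).prodMk (hasDerivAt_const t x))).deriv.symm

lemma fderiv_uncurry_apply_zero_one {u : ℝ → ℝ → ℝ} {t x : ℝ}
    (hu : DifferentiableAt ℝ (Function.uncurry u) (t, x)) :
    fderiv ℝ (Function.uncurry u) (t, x) (0, 1) = pdx u t x :=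
  (hu.hasFDerivAt.comp_hasDerivAt x ((hasDerivAt_const x t).prodMk (hasDerivAt_id x))).deriv.symm

theorem integral_eq_of_pdt_add_pdx_eq_zero {e f : ℝ → ℝ → ℝ} {a b t₀ t₁ : ℝ}
    (he : Differentiable ℝ (Function.uncurry e)) (hf : Differentiable ℝ (Function.uncurry f))
    (hflux : ∀ t ∈ uIcc t₀ t₁, f t b = f t a)
    (hlaw : ∀ t ∈ uIcc t₀ t₁, ∀ x ∈ uIcc a b, pdt e t x + pdx f t x = 0) :
    ∫ x in a..b, e t₁ x = ∫ x in a..b, e t₀ x := by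
  have hdiv : ∀ p ∈ uIcc t₀ t₁ ×ˢ uIcc a b, fderiv ℝ (Function.uncurry e) p (1, 0) +
      fderiv ℝ (Function.uncurry f) p (0, 1) = 0 := by
    rintro ⟨t, x⟩ ⟨ht, hx⟩
    rw [fderiv_uncurry_apply_one_zero (he _), fderiv_uncurry_apply_zero_one (hf _)]
    exact hlaw t ht x hx
  have hgreen := integral2_divergence_prod_of_hasFDerivAt
    (Function.uncurry e) (Function.uncurry f) (fderiv ℝ (Function.uncurry e))
    (fderiv ℝ (Function.uncurry f)) t₀ a t₁ b he.continuous.continuousOn hf.continuous.continuousOn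
    (fun p _ => (he p).hasFDerivAt) (fun p _ => (hf p).hasFDerivAt)
    (integrableOn_zero.congr_fun (fun p hp => (hdiv p hp).symm)
      (measurableSet_uIcc.prod measurableSet_uIcc))
  have hzero : ∫ t in t₀..t₁, ∫ x in a..b, (fderiv ℝ (Function.uncurry e) (t, x) (1, 0) +
      fderiv ℝ (Function.uncurry f) (t, x) (0, 1)) = 0 :=
    intervalIntegral.integral_zero_ae <| .of_forall fun t ht =>
      intervalIntegral.integral_zero_ae <| .of_forall fun x hx =>
        hdiv (t, x) ⟨uIoc_subset_uIcc ht, uIoc_subset_uIcc hx⟩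
  have hbdry : ∫ t in t₀..t₁, f t b = ∫ t in t₀..t₁, f t a :=
    intervalIntegral.integral_congr hflux
  simp only [Function.uncurry_apply_pair] at hgreen
  linarith

section SymmetricHyperbolic

variable {ι : Type*} [Fintype ι]

lemma dotProduct_mulVec_comm_of_isSymm {R : Type*} [CommSemiring R] {A : Matrix ι ι R}
    (hA : A.IsSymm) (v w : ι → R) : v ⬝ᵥ A *ᵥ w = w ⬝ᵥ A *ᵥ v := by
  rw [← dotProduct_transpose_mulVec, hA.eq]

lemma dotProduct_mulVec_self_eq_zero_of_transpose_eq_neg {R : Type*} [CommRing R]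
    [IsAddTorsionFree R] {B : Matrix ι ι R} (hB : Bᵀ = -B) (v : ι → R) : v ⬝ᵥ B *ᵥ v = 0 := by
  rw [← self_eq_neg, ← dotProduct_neg, ← neg_mulVec, ← hB, dotProduct_transpose_mulVec]

lemma hasDerivAt_dotProduct_mulVec_self {𝕜 : Type*} [NontriviallyNormedField 𝕜]
    {A : Matrix ι ι 𝕜} (hA : A.IsSymm) {v : 𝕜 → ι → 𝕜} {v' : ι → 𝕜} {s : 𝕜}
    (hv : ∀ i, HasDerivAt (fun r => v r i) (v' i) s) :
    HasDerivAt (fun r => v r ⬝ᵥ A *ᵥ v r) (2 * (v s ⬝ᵥ A *ᵥ v')) s := by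
  have hAv (i : ι) : HasDerivAt (fun r => (A *ᵥ v r) i) ((A *ᵥ v') i) s :=
    HasDerivAt.fun_sum fun j _ => (hv j).const_mul (A i j)
  refine (HasDerivAt.fun_sum fun i _ => (hv i).fun_mul (hAv i)).congr_deriv ?_
  rw [Finset.sum_add_distrib, two_mul]
  exact congrArg (· + _) (dotProduct_mulVec_comm_of_isSymm hA v' (v s))

variable {q : ι → ℝ → ℝ → ℝ}

lemma differentiable_dotProduct_mulVec_self (A : Matrix ι ι ℝ)
    (hq : ∀ i, Differentiable ℝ (Function.uncurry (q i))) :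
    Differentiable ℝ (Function.uncurry fun t x => (q · t x) ⬝ᵥ A *ᵥ (q · t x)) :=
  Differentiable.fun_sum fun i _ =>
    (hq i).fun_mul (Differentiable.fun_sum fun j _ => (hq j).const_mul (A i j))

theorem integral_dotProduct_mulVec_eq_of_symmetric_hyperbolic {D A B : Matrix ι ι ℝ}
    {a b t₀ t₁ : ℝ} (hD : D.IsSymm) (hA : A.IsSymm) (hB : Bᵀ = -B)
    (hq : ∀ i, Differentiable ℝ (Function.uncurry (q i)))
    (hper : ∀ i, ∀ t ∈ uIcc t₀ t₁, q i t b = q i t a)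
    (heq : ∀ t ∈ uIcc t₀ t₁, ∀ x ∈ uIcc a b,
      D *ᵥ (fun i => pdt (q i) t x) + A *ᵥ (fun i => pdx (q i) t x) = B *ᵥ (q · t x)) :
    ∫ x in a..b, (q · t₁ x) ⬝ᵥ D *ᵥ (q · t₁ x) = ∫ x in a..b, (q · t₀ x) ⬝ᵥ D *ᵥ (q · t₀ x) := by
  refine integral_eq_of_pdt_add_pdx_eq_zero
    (e := fun t x => (q · t x) ⬝ᵥ D *ᵥ (q · t x)) (f := fun t x => (q · t x) ⬝ᵥ A *ᵥ (q · t x))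
    (differentiable_dotProduct_mulVec_self D hq) (differentiable_dotProduct_mulVec_self A hq)
    (fun t ht => by simp only [hper _ t ht]) fun t ht x hx => ?_
  calc
    _ = 2 * ((q · t x) ⬝ᵥ D *ᵥ fun i => pdt (q i) t x) +
          2 * ((q · t x) ⬝ᵥ A *ᵥ fun i => pdx (q i) t x) :=
      congrArg₂ (· + ·)
        (hasDerivAt_dotProduct_mulVec_self hD fun i => hasDerivAt_pdt (hq i (t, x))).deriv
        (hasDerivAt_dotProduct_mulVec_self hA fun i => hasDerivAt_pdx (hq i (t, x))).deriv
    _ = 2 * ((q · t x) ⬝ᵥ B *ᵥ (q · t x)) := by rw [← mul_add, ← dotProduct_add, heq t ht x hx]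
    _ = 0 := by rw [dotProduct_mulVec_self_eq_zero_of_transpose_eq_neg hB, mul_zero]

end SymmetricHyperbolic

section HyperbolicApproximation

variable {R : Type*} [CommRing R] {m : ℕ}

/-- The coefficient matrix `diag(1, τ, …, τ)` of `∂_t q` in the hyperbolic approximation. Its
quadratic form is twice the energy density. -/
def massMatrix (m : ℕ) (τ : R) : Matrix (Fin m) (Fin m) R :=
  diagonal fun i => if (i : ℕ) = 0 then 1 else τ

/-- The coefficient matrix of `∂_x q` in the hyperbolic approximation: it couples `q_i` to
`∂_x q_{m-1-i}`. The condition on the indices avoids truncated subtraction. -/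
def fluxMatrix (m : ℕ) (σ : R) : Matrix (Fin m) (Fin m) R :=
  of fun i j => if (i : ℕ) + j + 1 = m then σ * (-1) ^ (i : ℕ) else 0

/-- The coefficient matrix of the source term in the hyperbolic approximation: it couples `q_i` to
`q_{m-i}`. Its row `0` vanishes, since `m` is not an index. -/
def sourceMatrix (m : ℕ) (σ : R) : Matrix (Fin m) (Fin m) R :=
  of fun i j => if (i : ℕ) + j = m then σ * (-1) ^ (i : ℕ) else 0

lemma isSymm_fluxMatrix (hm : Odd m) (σ : R) : (fluxMatrix m σ).IsSymm := by
  ext i j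
  by_cases hij : (i : ℕ) + j + 1 = m
  · have hparity : Even (i : ℕ) ↔ Even (j : ℕ) := by grind
    simp [fluxMatrix, hij, add_comm (j : ℕ), neg_one_pow_congr hparity]
  · simp [fluxMatrix, hij, add_comm (j : ℕ)]

lemma transpose_sourceMatrix (hm : Odd m) (σ : R) :
    (sourceMatrix m σ)ᵀ = -sourceMatrix m σ := by
  ext i j
  by_cases hij : (i : ℕ) + j = m
  · have hparity : Even (j : ℕ) ↔ Even ((i : ℕ) + 1) := by grind
    simp [sourceMatrix, hij, add_comm (j : ℕ), neg_one_pow_congr hparity, pow_succ]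
  · simp [sourceMatrix, hij, add_comm (j : ℕ)]

lemma fluxMatrix_mulVec_apply (σ : R) (v : ℕ → R) (i : Fin m) :
    (fluxMatrix m σ *ᵥ fun j => v j) i = σ * (-1) ^ (i : ℕ) * v (m - i - 1) := by
  have hrev (j : Fin m) : (i : ℕ) + j + 1 = m ↔ j = i.rev := by
    rw [Fin.ext_iff, Fin.val_rev]
    omega
  simp [fluxMatrix, mulVec, dotProduct, hrev, Nat.sub_sub]

lemma sourceMatrix_mulVec_apply_of_eq_zero (σ : R) (v : Fin m → R) {i : Fin m}
    (hi : (i : ℕ) = 0) : (sourceMatrix m σ *ᵥ v) i = 0 := by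
  simp [sourceMatrix, mulVec, dotProduct, hi, Fin.is_lt _ |>.ne]

lemma sourceMatrix_mulVec_apply_of_ne_zero (σ : R) (v : ℕ → R) {i : Fin m}
    (hi : (i : ℕ) ≠ 0) :
    (sourceMatrix m σ *ᵥ fun j => v j) i = σ * (-1) ^ (i : ℕ) * v (m - i) := by
  have hreflect (j : Fin m) : (i : ℕ) + j = m ↔ j = ⟨m - i, by omega⟩ := by
    simp only [Fin.ext_iff]
    omega
  simp [sourceMatrix, mulVec, dotProduct, hreflect]

lemma dotProduct_massMatrix_mulVec (hm : 0 < m) (τ : R) (v : ℕ → R) :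
    (fun i : Fin m => v i) ⬝ᵥ massMatrix m τ *ᵥ (fun i : Fin m => v i) =
      v 0 ^ 2 + τ * ∑ j ∈ Finset.Icc 1 (m - 1), v j ^ 2 := by
  have hIcc : Finset.Ico 1 m = Finset.Icc 1 (m - 1) := by
    ext
    simp only [Finset.mem_Ico, Finset.mem_Icc]
    omega
  simp only [massMatrix, dotProduct, mulVec_diagonal]
  rw [Fin.sum_univ_eq_sum_range (fun j => v j * ((if j = 0 then 1 else τ) * v j)),
    Finset.sum_range_eq_add_Ico _ hm, hIcc, Finset.mul_sum]
  refine congrArg₂ (· + ·) (by simp [sq]) (Finset.sum_congr rfl fun j hj => ?_)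
  rw [if_neg (Nat.one_le_iff_ne_zero.1 (Finset.mem_Icc.1 hj).1)]
  ring

lemma massMatrix_mulVec_add_fluxMatrix_mulVec {τ σ : R} {q qt qx : ℕ → R}
    (h₀ : qt 0 + σ * qx (m - 1) = 0)
    (h : ∀ j ∈ Finset.Icc 1 (m - 1),
      τ * qt j + σ * (-1) ^ j * qx (m - j - 1) = σ * (-1) ^ j * q (m - j)) :
    massMatrix m τ *ᵥ (fun i => qt i) + fluxMatrix m σ *ᵥ (fun i => qx i) =
      sourceMatrix m σ *ᵥ (fun i => q i) := by
  ext i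
  rw [Pi.add_apply, fluxMatrix_mulVec_apply, massMatrix, mulVec_diagonal]
  by_cases hi : (i : ℕ) = 0
  · simpa [sourceMatrix_mulVec_apply_of_eq_zero _ _ hi, hi] using h₀
  · rw [sourceMatrix_mulVec_apply_of_ne_zero _ _ hi, if_neg hi]
    exact h i (Finset.mem_Icc.2 (by omega))

end HyperbolicApproximation

theorem linear_odd_order_hyperbolic_energy_conservation_general
    {m : ℕ} (hm : Odd m) {σ₀ L T τ : ℝ} {q : ℕ → ℝ → ℝ → ℝ}
    (hq : ∀ j < m, Differentiable ℝ (Function.uncurry (q j)))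
    (hper : ∀ j < m, ∀ t ∈ Icc 0 T, q j t L = q j t 0)
    (heq₀ : ∀ t ∈ Icc 0 T, ∀ x ∈ uIcc 0 L, pdt (q 0) t x + σ₀ * pdx (q (m - 1)) t x = 0)
    (heq : ∀ j ∈ Finset.Icc 1 (m - 1), ∀ t ∈ Icc 0 T, ∀ x ∈ uIcc 0 L,
      τ * pdt (q j) t x + σ₀ * (-1 : ℝ) ^ j * pdx (q (m - j - 1)) t x
        = σ₀ * (-1 : ℝ) ^ j * q (m - j) t x) :
    ∀ t ∈ Icc 0 T,
      (∫ x in (0 : ℝ)..L, (q 0 t x ^ 2 / 2 + τ / 2 * ∑ j ∈ Finset.Icc 1 (m - 1), q j t x ^ 2))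
      = ∫ x in (0 : ℝ)..L, (q 0 0 x ^ 2 / 2 + τ / 2 * ∑ j ∈ Finset.Icc 1 (m - 1), q j 0 x ^ 2) := by
  intro t ht
  have henergy (s x : ℝ) : q 0 s x ^ 2 / 2 + τ / 2 * ∑ j ∈ Finset.Icc 1 (m - 1), q j s x ^ 2 =
      2⁻¹ * ((fun i : Fin m => q i s x) ⬝ᵥ massMatrix m τ *ᵥ (fun i : Fin m => q i s x)) := by
    rw [dotProduct_massMatrix_mulVec hm.pos τ fun j => q j s x]
    ring
  have hsub : uIcc 0 t ⊆ Icc 0 T := uIcc_of_le ht.1 ▸ Icc_subset_Icc_right ht.2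
  simp only [henergy, intervalIntegral.integral_const_mul]
  congr 1
  exact integral_dotProduct_mulVec_eq_of_symmetric_hyperbolic (q := fun i : Fin m => q i)
    (isSymm_diagonal _) (isSymm_fluxMatrix hm σ₀) (transpose_sourceMatrix hm σ₀)
    (fun i => hq i i.is_lt) (fun i s hs => hper i i.is_lt s (hsub hs))
    (fun s hs x hx => massMatrix_mulVec_add_fluxMatrix_mulVec (q := fun j => q j s x)
      (qt := fun j => pdt (q j) s x) (qx := fun j => pdx (q j) s x) (heq₀ s (hsub hs) x hx)
      fun j hj => heq j hj s (hsub hs) x hx)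

/-- Energy conservation for the Ketcheson–Biswas hyperbolic approximation of the
linear higher-order equation `∂_t u + σ₀ ∂_x^m u = 0` with odd leading order `m`. -/
theorem linear_odd_order_hyperbolic_energy_conservation
    (m : ℕ) (hm : Odd m) (hm3 : 3 ≤ m)
    (σ₀ : ℝ) (hσ : σ₀ = 1 ∨ σ₀ = -1)
    (L T τ : ℝ) (hL : 0 < L) (hT : 0 < T) (hτ : 0 < τ)
    (q : ℕ → ℝ → ℝ → ℝ)
    (hq : ∀ j < m, ContDiff ℝ 1 (Function.uncurry (q j)))
    (hper : ∀ j < m, ∀ t, Function.Periodic (q j t) L)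
    (heq₀ : ∀ t ∈ Set.Icc (0:ℝ) T, ∀ x : ℝ,
      pdt (q 0) t x + σ₀ * pdx (q (m - 1)) t x = 0)
    (heq : ∀ j ∈ Finset.Icc 1 (m - 1), ∀ t ∈ Set.Icc (0:ℝ) T, ∀ x : ℝ,
      τ * pdt (q j) t x + σ₀ * (-1 : ℝ) ^ j * pdx (q (m - j - 1)) t x
        = σ₀ * (-1 : ℝ) ^ j * q (m - j) t x) :
    ∀ t ∈ Set.Icc (0:ℝ) T,
      (∫ x in (0:ℝ)..L,
        (q 0 t x ^ 2 / 2 + τ / 2 * ∑ j ∈ Finset.Icc 1 (m - 1), q j t x ^ 2))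
      = ∫ x in (0:ℝ)..L,
        (q 0 0 x ^ 2 / 2 + τ / 2 * ∑ j ∈ Finset.Icc 1 (m - 1), q j 0 x ^ 2) := by
  exact linear_odd_order_hyperbolic_energy_conservation_general hm
    (fun j hj => (hq j hj).differentiable one_ne_zero) (fun j hj t _ => (hper j hj t).eq)
    (fun t ht x _ => heq₀ t ht x) (fun j hj t ht x _ => heq j hj t ht x)
end
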